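/- For every n ≥ 1, the number of elements of the Clifford+T group whose minimal T-count (the minimum number of occurrences of T over all words in {H, S, T} representing the element) equals n is exactly 5184·6^{n−1}; equivalently, for every n ≥ 0, the number of elements whose minimal T-count is at most n equals 648·(8·6ⁿ − 3)/5. -/

import Mathlib

open Matrix Complex

noncomputable section

/-- ω = exp(2πi/3), a primitive third root of unity. -/
def ω : ℂ := exp (2 * Real.pi * I / 3)

/-- ζ = exp(2πi/9), a primitive ninth root of unity. -/
def ζ : ℂ := exp (2 * Real.pi * I / 9)

/-- The qutrit Pauli X matrix. -/
def Xmat : Matrix (Fin 3) (Fin 3) ℂ := !![0,0,1; 1,0,0; 0,1,0]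

/-- The qutrit Pauli Z matrix. -/
def Zmat : Matrix (Fin 3) (Fin 3) ℂ := !![1,0,0; 0,ω,0; 0,0,ω^2]

/-- The qutrit Hadamard matrix H = (1/(i√3))·[[1,1,1],[1,ω,ω²],[1,ω²,ω]]. -/
def Hmat : Matrix (Fin 3) (Fin 3) ℂ :=
  (I * (Real.sqrt 3 : ℂ))⁻¹ • !![1,1,1; 1,ω,ω^2; 1,ω^2,ω]

/-- The qutrit phase matrix S = ζ⁸·diag(1,1,ω). -/
def Smat : Matrix (Fin 3) (Fin 3) ℂ := ζ^8 • !![1,0,0; 0,1,0; 0,0,ω]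

/-- The qutrit T matrix T = diag(1,ζ,ζ⁸). -/
def Tmat : Matrix (Fin 3) (Fin 3) ℂ := !![1,0,0; 0,ζ,0; 0,0,ζ^8]

lemma omega_ne_zero : ω ≠ 0 := Complex.exp_ne_zero _
lemma zeta_ne_zero : ζ ≠ 0 := Complex.exp_ne_zero _

lemma omega_im_pos : 0 < ω.im := by
  have h : ω = Complex.exp ((2 * Real.pi / 3 : ℝ) * I) := by
    rw [ω]; push_cast; ring_nf
  rw [h, Complex.exp_ofReal_mul_I_im]
  apply Real.sin_pos_of_pos_of_lt_pi
  · positivity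
  · nlinarith [Real.pi_pos]

lemma omega_ne_one : ω ≠ 1 := by
  intro h
  have := omega_im_pos
  rw [h] at this
  simp at this

lemma omega_cube : ω ^ 3 = 1 := by
  rw [ω, ← Complex.exp_nat_mul]
  rw [show (3:ℕ) * (2 * Real.pi * I / 3) = 2 * Real.pi * I by push_cast; ring]
  exact Complex.exp_two_pi_mul_I

lemma detX : Xmat.det ≠ 0 := by
  simp [Xmat, Matrix.det_fin_three]

lemma detZ : Zmat.det ≠ 0 := by
  simp [Zmat, Matrix.det_fin_three, omega_ne_zero]

lemma detS : Smat.det ≠ 0 := by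
  simp [Smat, Matrix.det_fin_three, omega_ne_zero, zeta_ne_zero]

lemma detT : Tmat.det ≠ 0 := by
  simp [Tmat, Matrix.det_fin_three, zeta_ne_zero]

lemma detH : Hmat.det ≠ 0 := by
  rw [Hmat, Matrix.det_smul]
  apply mul_ne_zero
  · apply pow_ne_zero
    apply inv_ne_zero
    apply mul_ne_zero Complex.I_ne_zero
    simp [Complex.ofReal_ne_zero]
  · rw [Matrix.det_fin_three]
    simp [Matrix.vecHead, Matrix.vecTail]
    intro h
    have h3 : ω ^ 3 = 1 := omega_cube
    have key : 3 * ω * (ω - 1) = 0 := by linear_combination h + ω * h3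
    rcases mul_eq_zero.mp key with h' | h'
    · rcases mul_eq_zero.mp h' with h'' | h''
      · norm_num at h''
      · exact omega_ne_zero h''
    · exact omega_ne_one (by linear_combination h')

/-- X as an element of GL(3, ℂ). -/
def Xg : GL (Fin 3) ℂ := Matrix.GeneralLinearGroup.mkOfDetNeZero Xmat detX

/-- Z as an element of GL(3, ℂ). -/
def Zg : GL (Fin 3) ℂ := Matrix.GeneralLinearGroup.mkOfDetNeZero Zmat detZ

/-- H as an element of GL(3, ℂ). -/
def Hg : GL (Fin 3) ℂ := Matrix.GeneralLinearGroup.mkOfDetNeZero Hmat detH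

/-- S as an element of GL(3, ℂ). -/
def Sg : GL (Fin 3) ℂ := Matrix.GeneralLinearGroup.mkOfDetNeZero Smat detS

/-- T as an element of GL(3, ℂ). -/
def Tg : GL (Fin 3) ℂ := Matrix.GeneralLinearGroup.mkOfDetNeZero Tmat detT

/-- The Clifford group 𝒞: the subgroup of GL(3,ℂ) generated by H and S. -/
def Cliff : Subgroup (GL (Fin 3) ℂ) := Subgroup.closure {Hg, Sg}

/-- The Clifford+T group: the subgroup of GL(3,ℂ) generated by H, S and T. -/
def CliffT : Subgroup (GL (Fin 3) ℂ) := Subgroup.closure {Hg, Sg, Tg}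

/-- The subgroup 𝒮 of GL(3,ℂ) generated by S and X. -/
def Sgrp : Subgroup (GL (Fin 3) ℂ) := Subgroup.closure {Sg, Xg}

/-- Letters of words over the alphabet {H, S, T}. -/
inductive Letter : Type
  | H : Letter
  | S : Letter
  | T : Letter
  deriving DecidableEq

/-- The gate associated to a letter. -/
def Letter.g : Letter → GL (Fin 3) ℂ
  | .H => Hg
  | .S => Sg
  | .T => Tg

/-- The product of the letters of a word. -/
def wordProd (w : List Letter) : GL (Fin 3) ℂ := (w.map Letter.g).prod

/-- The allowed prefixes of a canonical form: ε, T, H²T. -/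
def Prefixes : Set (List Letter) := {[], [.T], [.H, .H, .T]}

/-- The allowed syllables of a canonical form: HT, H³T, SHT, SH³T, S²HT, S²H³T. -/
def Syllables : Set (List Letter) :=
  {[.H, .T], [.H, .H, .H, .T], [.S, .H, .T],
   [.S, .H, .H, .H, .T], [.S, .S, .H, .T], [.S, .S, .H, .H, .H, .T]}

/-- The T-count of a canonical form with prefix `p` and syllable list `ss`:
`k` if the prefix is empty and `k+1` otherwise, where `k` is the number of syllables. -/
def TCount (p : List Letter) (ss : List (List Letter)) : ℕ :=
  ss.length + (if p = [] then 0 else 1)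

/-- P₊ = (P + P²)/√6. -/
def Pplus (P : Matrix (Fin 3) (Fin 3) ℂ) : Matrix (Fin 3) (Fin 3) ℂ :=
  ((Real.sqrt 6 : ℂ))⁻¹ • (P + P ^ 2)

/-- P₋ = i(P − P²)/√6. -/
def Pminus (P : Matrix (Fin 3) (Fin 3) ℂ) : Matrix (Fin 3) (Fin 3) ℂ :=
  (I * ((Real.sqrt 6 : ℂ))⁻¹) • (P - P ^ 2)

/-- The ordered tuple (Q₁, …, Q₈) = (Z₊, X₊, (XZ)₊, (XZ²)₊, Z₋, X₋, (XZ)₋, (XZ²)₋). -/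
def Q : Fin 8 → Matrix (Fin 3) (Fin 3) ℂ :=
  ![Pplus Zmat, Pplus Xmat, Pplus (Xmat * Zmat), Pplus (Xmat * Zmat ^ 2),
    Pminus Zmat, Pminus Xmat, Pminus (Xmat * Zmat), Pminus (Xmat * Zmat ^ 2)]

/-- The adjoint representation Û of U, the 8×8 real matrix with
entries Û_{ij} = tr(Qᵢ U Qⱼ U†). -/
def adj (U : Matrix (Fin 3) (Fin 3) ℂ) : Matrix (Fin 8) (Fin 8) ℝ :=
  Matrix.of fun i j => (Matrix.trace (Q i * U * Q j * Uᴴ)).re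

/-- The top-left 4×4 quadrant Û₊₊. -/
def blockPP (A : Matrix (Fin 8) (Fin 8) ℝ) : Matrix (Fin 4) (Fin 4) ℝ :=
  Matrix.of fun i j => A ⟨i.val, by omega⟩ ⟨j.val, by omega⟩

/-- The top-right 4×4 quadrant Û₊₋. -/
def blockPM (A : Matrix (Fin 8) (Fin 8) ℝ) : Matrix (Fin 4) (Fin 4) ℝ :=
  Matrix.of fun i j => A ⟨i.val, by omega⟩ ⟨j.val + 4, by omega⟩

/-- The bottom-left 4×4 quadrant Û₋₊. -/
def blockMP (A : Matrix (Fin 8) (Fin 8) ℝ) : Matrix (Fin 4) (Fin 4) ℝ :=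
  Matrix.of fun i j => A ⟨i.val + 4, by omega⟩ ⟨j.val, by omega⟩

/-- The bottom-right 4×4 quadrant Û₋₋. -/
def blockMM (A : Matrix (Fin 8) (Fin 8) ℝ) : Matrix (Fin 4) (Fin 4) ℝ :=
  Matrix.of fun i j => A ⟨i.val + 4, by omega⟩ ⟨j.val + 4, by omega⟩

/-- α = sin(2π/9). -/
def αR : ℝ := Real.sin (2 * Real.pi / 9)

/-- The ring ℤ[α]: the subring of ℝ generated by 1/2 and α. -/
def Zα : Subring ℝ := Subring.closure {1/2, αR}

/-- The ring ℤ[1/2, 1/α]: the subring of ℝ generated by 1/2, α and α⁻¹. -/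
def Zhα : Subring ℝ := Subring.closure {1/2, αR, αR⁻¹}

lemma alpha_mem_Zα : αR ∈ Zα := Subring.subset_closure (by simp)

/-- The minimal T-count of an element of the Clifford+T group: the minimum over all
words w in the alphabet {H, S, T} with product equal to U of the number of
occurrences of the letter T in w. -/
def minTcount (U : GL (Fin 3) ℂ) : ℕ :=
  sInf {k : ℕ | ∃ w : List Letter, wordProd w = U ∧ w.count Letter.T = k}


/-! ### Arithmetic of ζ and the reduction relation modulo `1 - ζ` -/

lemma zeta_prim : IsPrimitiveRoot ζ 9 := by
  have h := Complex.isPrimitiveRoot_exp 9 (by norm_num)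
  have e : ζ = Complex.exp (2 * Real.pi * I / (9 : ℕ)) := by rw [ζ]; norm_num
  rw [e]; exact h

lemma omega_eq : ω = ζ ^ 3 := by
  rw [ω, ζ, ← Complex.exp_nat_mul]; congr 1; push_cast; ring

lemma zeta_nine : ζ ^ 9 = 1 := zeta_prim.pow_eq_one

lemma zeta_phi : ζ ^ 6 + ζ ^ 3 + 1 = 0 := by
  have h1 : ζ ^ 3 ≠ 1 := by rw [← omega_eq]; exact omega_ne_one
  have h : (ζ ^ 3 - 1) * (ζ ^ 6 + ζ ^ 3 + 1) = 0 := by linear_combination zeta_nine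
  rcases mul_eq_zero.mp h with h | h
  · exact absurd (by linear_combination h) h1
  · exact h

lemma zeta_six : ζ ^ 6 = - ζ ^ 3 - 1 := by linear_combination zeta_phi

lemma zeta_ne_one : ζ ≠ 1 := zeta_prim.ne_one (by norm_num)

lemma omega_re_im : ω = ⟨-1/2, Real.sqrt 3 / 2⟩ := by
  have h : ω = Complex.exp ((2 * Real.pi / 3 : ℝ) * I) := by
    rw [ω]; push_cast; ring_nf
  have e : 2 * Real.pi / 3 = Real.pi - Real.pi / 3 := by ring
  apply Complex.ext
  · rw [h, Complex.exp_ofReal_mul_I_re, e, Real.cos_pi_sub, Real.cos_pi_div_three]; norm_num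
  · rw [h, Complex.exp_ofReal_mul_I_im, e, Real.sin_pi_sub, Real.sin_pi_div_three]

lemma isqrt_eq : I * (Real.sqrt 3 : ℂ) = 2 * ζ ^ 3 + 1 := by
  rw [← omega_eq, omega_re_im]
  apply Complex.ext <;> simp <;> ring

lemma isqrt_inv : (I * (Real.sqrt 3 : ℂ))⁻¹ = -(2 * ζ ^ 3 + 1) / 3 := by
  rw [isqrt_eq]
  apply inv_eq_of_mul_eq_one_left
  linear_combination (-4/3 : ℂ) * zeta_phi

/-- `Red z a`: the number `z` lies in `ℤ[ζ]` and reduces to `a` modulo `1 - ζ`. -/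
def Red (z : ℂ) (a : ZMod 3) : Prop :=
  ∃ p : Polynomial ℤ, Polynomial.aeval ζ p = z ∧ ((p.eval 1 : ℤ) : ZMod 3) = a

lemma Red.add {z w : ℂ} {a b : ZMod 3} (h : Red z a) (h' : Red w b) : Red (z + w) (a + b) := by
  obtain ⟨p, rfl, rfl⟩ := h
  obtain ⟨q, rfl, rfl⟩ := h'
  exact ⟨p + q, by simp, by simp⟩

lemma Red.mul {z w : ℂ} {a b : ZMod 3} (h : Red z a) (h' : Red w b) : Red (z * w) (a * b) := by
  obtain ⟨p, rfl, rfl⟩ := h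
  obtain ⟨q, rfl, rfl⟩ := h'
  exact ⟨p * q, by simp, by simp⟩

lemma Red.neg {z : ℂ} {a : ZMod 3} (h : Red z a) : Red (-z) (-a) := by
  obtain ⟨p, rfl, rfl⟩ := h
  exact ⟨-p, by simp, by simp⟩

lemma red_zero : Red 0 0 := ⟨0, by simp, by simp⟩
lemma red_one : Red 1 1 := ⟨1, by simp, by simp⟩
lemma red_zeta : Red ζ 1 := ⟨Polynomial.X, by simp, by simp⟩

lemma Red.pow {z : ℂ} {a : ZMod 3} (h : Red z a) (n : ℕ) : Red (z ^ n) (a ^ n) := by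
  induction n with
  | zero => simpa using red_one
  | succ n ih => rw [pow_succ, pow_succ]; exact ih.mul h

lemma red_lam : Red (1 - ζ) 0 := ⟨1 - Polynomial.X, by simp, by simp⟩

lemma red_unique {z : ℂ} {a b : ZMod 3} (h : Red z a) (h' : Red z b) : a = b := by
  have h0 : Red 0 (a + -b) := by simpa using h.add h'.neg
  obtain ⟨p, hp, hpe⟩ := h0
  have hzi : IsIntegral ℤ ζ := zeta_prim.isIntegral (by norm_num)
  obtain ⟨q, rfl⟩ := minpoly.isIntegrallyClosed_dvd hzi hp
  rw [← Polynomial.cyclotomic_eq_minpoly zeta_prim (by norm_num)] at hpe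
  have h9 : Polynomial.eval 1 (Polynomial.cyclotomic 9 ℤ) = 3 := by
    have := Polynomial.eval_one_cyclotomic_prime_pow (R := ℤ) (p := 3) 1
    simpa using this
  rw [Polynomial.eval_mul, h9] at hpe
  have h3 : ((3 * Polynomial.eval 1 q : ℤ) : ZMod 3) = 0 := by
    push_cast
    rw [show (3 : ZMod 3) = 0 from rfl, zero_mul]
  rw [h3] at hpe
  exact (add_neg_eq_zero.mp hpe.symm)

/-! ### The Clifford-stable lattice -/

/-- A basis of a lattice stable under the Clifford group. -/
def Pmat : Matrix (Fin 3) (Fin 3) ℂ :=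
  !![1 - ζ, 0, 0;
     1 - ζ, (2 * ζ ^ 3 + 1) * (1 - ζ), 2 * ζ ^ 3 + 1;
     1 - ζ, 0, -(2 * ζ ^ 3 + 1)]

lemma lam_ne : (1 - ζ) ≠ 0 := sub_ne_zero.mpr zeta_ne_one.symm

lemma s_ne : (2 * ζ ^ 3 + 1) ≠ 0 := by
  intro h
  have : (3 : ℂ) = 0 := by
    linear_combination (2 * ζ ^ 3 + 1) * (-1) * h + 4 * zeta_phi
  norm_num at this

lemma P_det : Pmat.det ≠ 0 := by
  have : Pmat.det = - ((1 - ζ) ^ 2 * (2 * ζ ^ 3 + 1) ^ 2) := by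
    rw [Pmat, Matrix.det_fin_three]; simp; ring
  rw [this]
  exact neg_ne_zero.mpr (mul_ne_zero (pow_ne_zero _ lam_ne) (pow_ne_zero _ s_ne))

/-- `U` has integral expression `N` of level `n` with top rows `r₀`, `r₁` of the residue. -/
def V (n : ℕ) (U : GL (Fin 3) ℂ) (r₀ r₁ : Fin 3 → ZMod 3) : Prop :=
  ∃ (N : Matrix (Fin 3) (Fin 3) ℂ) (A : Matrix (Fin 3) (Fin 3) (ZMod 3)),
    (∀ i j, Red (N i j) (A i j)) ∧ (1 - ζ) ^ n • (U.val * Pmat) = Pmat * N ∧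
    A 0 = r₀ ∧ A 1 = r₁

lemma P_cancel {M N : Matrix (Fin 3) (Fin 3) ℂ} (h : Pmat * M = Pmat * N) : M = N := by
  have hu : IsUnit Pmat := (Matrix.isUnit_iff_isUnit_det _).mpr (isUnit_iff_ne_zero.mpr P_det)
  exact hu.mul_left_cancel h

lemma V_cmp {n k : ℕ} {U : GL (Fin 3) ℂ} {r₀ r₁ r₀' r₁' : Fin 3 → ZMod 3}
    (h : V n U r₀ r₁) (h' : V (n + k) U r₀' r₁') :
    r₀' = (0 : ZMod 3) ^ k • r₀ ∧ r₁' = (0 : ZMod 3) ^ k • r₁ := by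
  obtain ⟨N, A, hR, hN, rfl, rfl⟩ := h
  obtain ⟨N', A', hR', hN', rfl, rfl⟩ := h'
  have e : N' = (1 - ζ) ^ k • N := by
    apply P_cancel
    rw [← hN', Matrix.mul_smul, ← hN, smul_smul, pow_add, mul_comm]
  have key : ∀ i j, A' i j = 0 ^ k * A i j := by
    intro i j
    apply red_unique (hR' i j)
    rw [e]
    exact (red_lam.pow k).mul (hR i j)
  exact ⟨funext fun j => key 0 j, funext fun j => key 1 j⟩

lemma V_eq {n : ℕ} {U : GL (Fin 3) ℂ} {r₀ r₁ r₀' r₁' : Fin 3 → ZMod 3}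
    (h : V n U r₀ r₁) (h' : V n U r₀' r₁') : r₀' = r₀ ∧ r₁' = r₁ := by
  simpa using V_cmp (k := 0) h h'

lemma V_lt {n m : ℕ} (hnm : n < m) {U : GL (Fin 3) ℂ} {r₀ r₁ r₀' r₁' : Fin 3 → ZMod 3}
    (h : V n U r₀ r₁) (h' : V m U r₀' r₁') : r₀' = 0 ∧ r₁' = 0 := by
  obtain ⟨k, rfl⟩ := Nat.exists_eq_add_of_lt hnm
  have := V_cmp (k := k + 1) h (by simpa [add_assoc] using h')
  simpa using this

lemma V_mul {n k : ℕ} {W U : GL (Fin 3) ℂ} {r₀ r₁ : Fin 3 → ZMod 3}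
    {N : Matrix (Fin 3) (Fin 3) ℂ} {A : Matrix (Fin 3) (Fin 3) (ZMod 3)}
    (hR : ∀ i j, Red (N i j) (A i j)) (hN : (1 - ζ) ^ k • (W.val * Pmat) = Pmat * N)
    (h02 : A 0 2 = 0) (h12 : A 1 2 = 0)
    (h : V n U r₀ r₁) :
    V (n + k) (W * U) (A 0 0 • r₀ + A 0 1 • r₁) (A 1 0 • r₀ + A 1 1 • r₁) := by
  obtain ⟨N', A', hR', hN', rfl, rfl⟩ := h
  refine ⟨N * N', A * A', ?_, ?_, ?_, ?_⟩
  · intro i j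
    rw [Matrix.mul_apply, Matrix.mul_apply, Fin.sum_univ_three, Fin.sum_univ_three]
    exact (((hR _ _).mul (hR' _ _)).add ((hR _ _).mul (hR' _ _))).add ((hR _ _).mul (hR' _ _))
  · rw [← Matrix.mul_assoc, ← hN, Matrix.smul_mul, Matrix.mul_assoc, ← hN', Units.val_mul,
      Matrix.mul_smul, smul_smul, ← pow_add, add_comm, Matrix.mul_assoc]
  · funext j; simp [Matrix.mul_apply, Fin.sum_univ_three, h02]
  · funext j; simp [Matrix.mul_apply, Fin.sum_univ_three, h12]

lemma V_one : V 0 1 ![1, 0, 0] ![0, 1, 0] := by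
  refine ⟨1, 1, ?_, by simp, ?_, ?_⟩
  · intro i j
    fin_cases i <;> fin_cases j <;> first | exact red_one | exact red_zero
  · decide
  · decide

lemma Hval : Hg.val = (-(2 * ζ ^ 3 + 1) / 3) • !![1,1,1; 1,ζ^3,-ζ^3-1; 1,-ζ^3-1,ζ^3] := by
  show Hmat = _
  rw [Hmat, isqrt_inv, omega_eq, ← pow_mul, show 3 * 2 = 6 from rfl, zeta_six]

lemma zeta_eight : ζ ^ 8 = -ζ ^ 5 - ζ ^ 2 := by linear_combination ζ ^ 2 * zeta_phi

lemma Sval : Sg.val = !![-ζ^5-ζ^2,0,0; 0,-ζ^5-ζ^2,0; 0,0,ζ^2] := by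
  show Smat = _
  rw [Smat, omega_eq, ← zeta_eight]
  ext i j
  fin_cases i <;> fin_cases j <;> simp
  linear_combination ζ ^ 2 * zeta_nine

lemma Tval : Tg.val = !![1,0,0; 0,ζ,0; 0,0,-ζ^5-ζ^2] := by
  show Tmat = _
  rw [Tmat, ← zeta_eight]

lemma Tival : (Tg⁻¹).val = !![1,0,0; 0,-ζ^5-ζ^2,0; 0,0,ζ] := by
  have h : Tg.val * !![1,0,0; 0,-ζ^5-ζ^2,0; 0,0,ζ] = 1 := by
    rw [Tval]
    ext i j
    fin_cases i <;> fin_cases j <;> simp [Matrix.mul_apply, Fin.sum_univ_three]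
    all_goals linear_combination -zeta_phi
  calc (Tg⁻¹).val = (Tg⁻¹).val * (Tg.val * !![1,0,0; 0,-ζ^5-ζ^2,0; 0,0,ζ]) := by rw [h, mul_one]
    _ = _ := by rw [← Matrix.mul_assoc, ← Units.val_mul, inv_mul_cancel, Units.val_one, one_mul]

/-- The element of `ℤ[ζ]` with the given coefficients. -/
def ev (c : Fin 6 → ℤ) : ℂ := ∑ k, (c k : ℂ) * ζ ^ (k : ℕ)

lemma red_int (n : ℤ) : Red n n := ⟨Polynomial.C n, by simp, by simp⟩

lemma red_ev (c : Fin 6 → ℤ) : Red (ev c) ((∑ k, c k : ℤ) : ZMod 3) := by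
  have h : ∀ k, Red ((c k : ℂ) * ζ ^ (k : ℕ)) (c k) := fun k => by
    simpa using (red_int (c k)).mul (red_zeta.pow k)
  rw [ev, Fin.sum_univ_six, Fin.sum_univ_six]
  push_cast
  exact (((((h 0).add (h 1)).add (h 2)).add (h 3)).add (h 4)).add (h 5)

def cH : Fin 3 → Fin 3 → Fin 6 → ℤ :=
  ![![![-1, 0, 0, -2, 0, 0], ![1, 0, 0, 0, 0, 0], ![0, 0, 0, 0, 0, 0]],
    ![![2, 0, 0, 0, 0, 0], ![1, 0, 0, 2, 0, 0], ![0, 0, 0, 0, 0, 0]],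
    ![![-1, 1, 0, 0, 0, 0], ![0, 0, 0, -1, 1, 0], ![1, 0, 0, 0, 0, 0]]]

def cS : Fin 3 → Fin 3 → Fin 6 → ℤ :=
  ![![![0, 0, -1, 0, 0, -1], ![0, 0, 0, 0, 0, 0], ![0, 0, 0, 0, 0, 0]],
    ![![0, 0, 0, 0, 0, -1], ![0, 0, -1, 0, 0, -1], ![1, 1, -1, 0, 0, -1]],
    ![![1, 0, 0, 1, 0, 1], ![0, 0, 0, 0, 0, 0], ![0, 0, 1, 0, 0, 0]]]

def cT : Fin 3 → Fin 3 → Fin 6 → ℤ :=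
  ![![![1, -1, 0, 0, 0, 0], ![0, 0, 0, 0, 0, 0], ![0, 0, 0, 0, 0, 0]],
    ![![1, -1, 0, 2, -2, 1], ![0, 1, -1, 0, 0, 0], ![0, 1, 1, 0, 0, 1]],
    ![![-1, 1, 0, -2, 2, -1], ![0, 0, 0, 0, 0, 0], ![-1, 0, -1, 0, 0, -1]]]

def cTi : Fin 3 → Fin 3 → Fin 6 → ℤ :=
  ![![![1, -1, 0, 0, 0, 0], ![0, 0, 0, 0, 0, 0], ![0, 0, 0, 0, 0, 0]],
    ![![1, -1, 0, 2, -2, 1], ![-1, 0, -1, 0, 0, -1], ![0, -1, -1, 0, 0, -1]],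
    ![![-1, 1, -1, -1, 2, -2], ![0, 0, 0, 0, 0, 0], ![0, 1, -1, 0, 0, 0]]]

lemma V_mul_ev (c : Fin 3 → Fin 3 → Fin 6 → ℤ) {n k : ℕ} {W U : GL (Fin 3) ℂ}
    {r₀ r₁ : Fin 3 → ZMod 3}
    (hN : (1 - ζ) ^ k • (W.val * Pmat) = Pmat * Matrix.of fun i j => ev (c i j))
    (a00 a01 a10 a11 : ZMod 3)
    (hA : ((∑ k, c 0 0 k : ℤ) : ZMod 3) = a00 ∧ ((∑ k, c 0 1 k : ℤ) : ZMod 3) = a01 ∧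
      ((∑ k, c 0 2 k : ℤ) : ZMod 3) = 0 ∧
      ((∑ k, c 1 0 k : ℤ) : ZMod 3) = a10 ∧ ((∑ k, c 1 1 k : ℤ) : ZMod 3) = a11 ∧
      ((∑ k, c 1 2 k : ℤ) : ZMod 3) = 0)
    (h : V n U r₀ r₁) :
    V (n + k) (W * U) (a00 • r₀ + a01 • r₁) (a10 • r₀ + a11 • r₁) := by
  obtain ⟨rfl, rfl, h02, rfl, rfl, h12⟩ := hA
  exact V_mul (A := Matrix.of fun i j => ((∑ k, c i j k : ℤ) : ZMod 3))
    (fun i j => red_ev (c i j)) hN h02 h12 h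

lemma eqH : (1 - ζ) ^ 0 • (Hg.val * Pmat) = Pmat * Matrix.of fun i j => ev (cH i j) := by
  have hz := zeta_phi
  rw [Hval, Pmat]
  ext i j
  fin_cases i <;> fin_cases j <;>
    simp [Matrix.mul_apply, Fin.sum_univ_three, ev, cH, Fin.sum_univ_six] <;> grind

lemma eqS : (1 - ζ) ^ 0 • (Sg.val * Pmat) = Pmat * Matrix.of fun i j => ev (cS i j) := by
  have hz := zeta_phi
  rw [Sval, Pmat]
  ext i j
  fin_cases i <;> fin_cases j <;>
    simp [Matrix.mul_apply, Fin.sum_univ_three, ev, cS, Fin.sum_univ_six] <;> grind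

lemma eqT : (1 - ζ) ^ 1 • (Tg.val * Pmat) = Pmat * Matrix.of fun i j => ev (cT i j) := by
  have hz := zeta_phi
  rw [Tval, Pmat]
  ext i j
  fin_cases i <;> fin_cases j <;>
    simp [Matrix.mul_apply, Fin.sum_univ_three, ev, cT, Fin.sum_univ_six] <;> grind

lemma eqTi : (1 - ζ) ^ 1 • ((Tg⁻¹).val * Pmat) = Pmat * Matrix.of fun i j => ev (cTi i j) := by
  have hz := zeta_phi
  rw [Tival, Pmat]
  ext i j
  fin_cases i <;> fin_cases j <;>
    simp [Matrix.mul_apply, Fin.sum_univ_three, ev, cTi, Fin.sum_univ_six] <;> grind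

section
variable {n : ℕ} {U : GL (Fin 3) ℂ} {r₀ r₁ : Fin 3 → ZMod 3}

lemma V_H (h : V n U r₀ r₁) : V n (Hg * U) r₁ (-r₀) := by
  have := V_mul_ev cH eqH 0 1 (-1) 0 (by decide) h
  simpa using this

lemma V_S (h : V n U r₀ r₁) : V n (Sg * U) r₀ (r₁ - r₀) := by
  have := V_mul_ev cS eqS 1 0 (-1) 1 (by decide) h
  simpa [sub_eq_neg_add] using this

lemma V_T (h : V n U r₀ r₁) : V (n + 1) (Tg * U) 0 r₀ := by
  have := V_mul_ev cT eqT 0 0 1 0 (by decide) h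
  simpa using this

lemma V_Ti (h : V n U r₀ r₁) : V (n + 1) (Tg⁻¹ * U) 0 r₀ := by
  have := V_mul_ev cTi eqTi 0 0 1 0 (by decide) h
  simpa using this
end

/-! ### Monomial matrices -/

/-- The power of ζ with exponent in `ZMod 9`. -/
def ze (a : ZMod 9) : ℂ := ζ ^ a.val

lemma ze_add (a b : ZMod 9) : ze (a + b) = ze a * ze b := by
  rw [ze, ze, ze, ZMod.val_add, ← pow_add, ← pow_mod_orderOf ζ (a.val + b.val),
    ← zeta_prim.eq_orderOf]

lemma ze_zero : ze 0 = 1 := by simp [ze]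

lemma ze_ne (a : ZMod 9) : ze a ≠ 0 := pow_ne_zero _ zeta_ne_zero

lemma ze_inj {a b : ZMod 9} (h : ze a = ze b) : a = b :=
  ZMod.val_injective 9 (zeta_prim.pow_inj (ZMod.val_lt a) (ZMod.val_lt b) h)

/-- The signed monomial matrix with permutation `σ` and phases `ζ ^ x j`. -/
def mono (σ : Equiv.Perm (Fin 3)) (x : Fin 3 → ZMod 9) : Matrix (Fin 3) (Fin 3) ℂ :=
  Matrix.of fun i j => if i = σ j then ((Equiv.Perm.sign σ : ℤ) : ℂ) * ze (x j) else 0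

lemma mono_mul (σ τ : Equiv.Perm (Fin 3)) (x y : Fin 3 → ZMod 9) :
    mono σ x * mono τ y = mono (σ * τ) (x ∘ τ + y) := by
  ext i j
  simp only [mono, Matrix.mul_apply, Matrix.of_apply, mul_ite, mul_zero, Finset.sum_ite_eq',
    Finset.mem_univ, if_true, Equiv.Perm.coe_mul, Function.comp_apply,
    Pi.add_apply, ze_add, Equiv.Perm.sign_mul, Units.val_mul, Int.cast_mul, ite_mul, zero_mul]
  split_ifs <;> ring

lemma mono_one : mono 1 0 = 1 := by
  ext i j
  simp [mono, Matrix.one_apply, ze_zero]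

/-- The monomial matrix as a group element. -/
def monoG (σ : Equiv.Perm (Fin 3)) (x : Fin 3 → ZMod 9) : GL (Fin 3) ℂ where
  val := mono σ x
  inv := mono σ⁻¹ (-(x ∘ ⇑σ⁻¹))
  val_inv := by
    rw [mono_mul, mul_inv_cancel, add_neg_cancel, mono_one]
  inv_val := by
    rw [mono_mul, inv_mul_cancel, ← mono_one]
    congr 1
    funext i
    simp

lemma monoG_mul (σ τ : Equiv.Perm (Fin 3)) (x y : Fin 3 → ZMod 9) :
    monoG σ x * monoG τ y = monoG (σ * τ) (x ∘ τ + y) := Units.ext (mono_mul σ τ x y)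

lemma monoG_one : monoG 1 0 = 1 := Units.ext mono_one

lemma monoG_inj {σ τ : Equiv.Perm (Fin 3)} {x y : Fin 3 → ZMod 9} (h : monoG σ x = monoG τ y) :
    σ = τ ∧ x = y := by
  have h' : mono σ x = mono τ y := congrArg Units.val h
  have hs : ∀ ρ : Equiv.Perm (Fin 3), ((Equiv.Perm.sign ρ : ℤ) : ℂ) ≠ 0 := fun ρ => by
    exact_mod_cast (Equiv.Perm.sign ρ).ne_zero
  have hst : σ = τ := by
    ext j
    have e := congrFun (congrFun h' (σ j)) j
    by_contra hne
    have hne' : σ j ≠ τ j := fun h => hne (by rw [h])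
    simp only [mono, Matrix.of_apply, if_true, if_neg hne'] at e
    exact mul_ne_zero (hs σ) (ze_ne _) e
  subst hst
  refine ⟨rfl, funext fun j => ?_⟩
  have e := congrFun (congrFun h' (σ j)) j
  simp only [mono, Matrix.of_apply, if_true] at e
  exact ze_inj (mul_left_cancel₀ (hs σ) e)

lemma monoG_one_pow (x : Fin 3 → ZMod 9) (n : ℕ) : monoG 1 x ^ n = monoG 1 (n • x) := by
  induction n with
  | zero => simp [monoG_one]
  | succ n ih =>
    rw [pow_succ, ih, monoG_mul, mul_one, succ_nsmul]
    rfl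

lemma S_mono : Sg = monoG 1 ![8, 8, 2] := by
  apply Units.ext
  rw [Sval]
  show _ = mono _ _
  ext i j
  fin_cases i <;> fin_cases j <;>
    simp [mono, ze, show (8 : ZMod 9).val = 8 from rfl, show (2 : ZMod 9).val = 2 from rfl,
      zeta_eight]

lemma T_mono : Tg = monoG 1 ![0, 1, 8] := by
  apply Units.ext
  rw [Tval]
  show _ = mono _ _
  ext i j
  fin_cases i <;> fin_cases j <;>
    simp [mono, ze, show (8 : ZMod 9).val = 8 from rfl, show (1 : ZMod 9).val = 1 from rfl,
      zeta_eight]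

lemma X_mono : Xg = monoG (finRotate 3) 0 := by
  apply Units.ext
  show Xmat = mono _ _
  have hs : Equiv.Perm.sign (finRotate 3) = 1 := by decide
  rw [Xmat, mono, hs]
  ext i j
  fin_cases i <;> fin_cases j <;> simp [ze_zero]

lemma H2_mono : Hg * Hg = monoG (Equiv.swap 1 2) 0 := by
  apply Units.ext
  have hz := zeta_phi
  have hs : Equiv.Perm.sign (Equiv.swap (1 : Fin 3) 2) = -1 := by decide
  rw [Units.val_mul, Hval]
  show _ = mono _ _
  rw [mono, hs]
  ext i j
  fin_cases i <;> fin_cases j <;>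
    simp [ze_zero, Matrix.mul_apply, Fin.sum_univ_three, Equiv.swap_apply_def] <;> grind

lemma HSH : Hg * (Sg * Hg) = Sg * (Sg * (Hg * monoG (Equiv.swap 1 2) ![4, 4, 1])) := by
  apply Units.ext
  have hz := zeta_phi
  have hs : Equiv.Perm.sign (Equiv.swap (1 : Fin 3) 2) = -1 := by decide
  simp only [Units.val_mul, Hval, Sval]
  rw [show (monoG (Equiv.swap 1 2) ![4, 4, 1]).val =
    !![-ζ^4, 0, 0; 0, 0, -ζ; 0, -ζ^4, 0] from ?_]
  · ext i j
    fin_cases i <;> fin_cases j <;>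
      simp [Matrix.mul_apply, Fin.sum_univ_three] <;> grind
  · show mono _ _ = _
    rw [mono, hs]
    ext i j
    fin_cases i <;> fin_cases j <;>
      simp [ze, Equiv.swap_apply_def, show (4 : ZMod 9).val = 4 from rfl,
        show (1 : ZMod 9).val = 1 from rfl]

lemma HSSH : Hg * (Sg * (Sg * Hg)) = Sg * (Hg * monoG (finRotate 3) ![5, 8, 5]) := by
  apply Units.ext
  have hz := zeta_phi
  have hs : Equiv.Perm.sign (finRotate 3) = 1 := by decide
  simp only [Units.val_mul, Hval, Sval]
  rw [show (monoG (finRotate 3) ![5, 8, 5]).val =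
    !![0, 0, ζ^5; ζ^5, 0, 0; 0, -ζ^5-ζ^2, 0] from ?_]
  · ext i j
    fin_cases i <;> fin_cases j <;>
      simp [Matrix.mul_apply, Fin.sum_univ_three] <;> grind
  · show mono _ _ = _
    rw [mono, hs]
    ext i j
    fin_cases i <;> fin_cases j <;>
      simp [ze, show (5 : ZMod 9).val = 5 from rfl,
        show (8 : ZMod 9).val = 8 from rfl, zeta_eight]

lemma XH_comm : Xg * Hg = Hg * monoG 1 ![0, 6, 3] := by
  apply Units.ext
  have hz := zeta_phi
  simp only [Units.val_mul, Hval]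
  rw [show (monoG 1 ![0, 6, 3]).val =
    !![1, 0, 0; 0, -ζ^3-1, 0; 0, 0, ζ^3] from ?_, show Xg.val = Xmat from rfl, Xmat]
  · ext i j
    fin_cases i <;> fin_cases j <;>
      simp [Matrix.mul_apply, Fin.sum_univ_three] <;> grind
  · show mono _ _ = _
    rw [mono]
    ext i j
    fin_cases i <;> fin_cases j <;>
      simp [ze, show (3 : ZMod 9).val = 3 from rfl,
        show (6 : ZMod 9).val = 6 from rfl, zeta_six]

/-! ### The group `B` of monomial Cliffords -/

/-- The condition on phases of monomial Clifford matrices. -/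
def pcond (x : Fin 3 → ZMod 9) : Prop := ∑ i, x i = 0 ∧ ∀ i j, 3 * x i = 3 * x j

instance (x : Fin 3 → ZMod 9) : Decidable (pcond x) := by unfold pcond; infer_instance

lemma pcond_add {x y : Fin 3 → ZMod 9} (hx : pcond x) (hy : pcond y) : pcond (x + y) := by
  refine ⟨?_, fun i j => ?_⟩
  · simp only [Pi.add_apply, Finset.sum_add_distrib, hx.1, hy.1, add_zero]
  · simp only [Pi.add_apply, mul_add, hx.2 i j, hy.2 i j]

lemma pcond_neg {x : Fin 3 → ZMod 9} (hx : pcond x) : pcond (-x) := by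
  refine ⟨?_, fun i j => ?_⟩
  · simp only [Pi.neg_apply, Finset.sum_neg_distrib, hx.1, neg_zero]
  · simp only [Pi.neg_apply, mul_neg, hx.2 i j]

lemma pcond_comp {x : Fin 3 → ZMod 9} (hx : pcond x) (σ : Equiv.Perm (Fin 3)) : pcond (x ∘ σ) :=
  ⟨by rw [← hx.1]; exact Equiv.sum_comp σ x, fun i j => hx.2 _ _⟩

/-- The subgroup of monomial Clifford matrices. -/
def Bgrp : Subgroup (GL (Fin 3) ℂ) where
  carrier := {g | ∃ σ x, pcond x ∧ g = monoG σ x}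
  mul_mem' := by
    rintro _ _ ⟨σ, x, hx, rfl⟩ ⟨τ, y, hy, rfl⟩
    exact ⟨σ * τ, _, pcond_add (pcond_comp hx τ) hy, monoG_mul _ _ _ _⟩
  one_mem' := ⟨1, 0, by decide, monoG_one.symm⟩
  inv_mem' := by
    rintro _ ⟨σ, x, hx, rfl⟩
    exact ⟨σ⁻¹, _, pcond_neg (pcond_comp hx σ⁻¹), Units.ext rfl⟩

lemma mem_B {g : GL (Fin 3) ℂ} : g ∈ Bgrp ↔ ∃ σ x, pcond x ∧ g = monoG σ x := Iff.rfl

/-- Exponents of `S` and `Z`. -/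
def xp (d : Fin 9) (c : Fin 3) : Fin 3 → ZMod 9 :=
  (d : ℕ) • ![8, 8, 2] + (c : ℕ) • ![0, 3, 6]

lemma xp_cond : ∀ d c, pcond (xp d c) := by decide

lemma xp_inj : ∀ d c d' c', xp d c = xp d' c' → d = d' ∧ c = c' := by decide

lemma xp_surj_aux : ∀ a b : ZMod 9, 3 * a = 3 * b →
    ∃ d c, a = xp d c 0 ∧ b = xp d c 1 ∧ -(a + b) = xp d c 2 := by decide

lemma xp_surj {x : Fin 3 → ZMod 9} (hx : pcond x) : ∃ d c, x = xp d c := by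
  obtain ⟨d, c, h0, h1, h2⟩ := xp_surj_aux (x 0) (x 1) (hx.2 0 1)
  refine ⟨d, c, ?_⟩
  have h := hx.1
  rw [Fin.sum_univ_three] at h
  funext i
  fin_cases i
  · exact h0
  · exact h1
  · exact (eq_neg_of_add_eq_zero_right h).trans h2

lemma B_ncard : (Bgrp : Set (GL (Fin 3) ℂ)).ncard = 162 := by
  let f : Equiv.Perm (Fin 3) × Fin 9 × Fin 3 → GL (Fin 3) ℂ := fun p => monoG p.1 (xp p.2.1 p.2.2)
  have hf : Function.Injective f := by
    rintro ⟨σ, d, c⟩ ⟨τ, d', c'⟩ h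
    obtain ⟨rfl, h2⟩ := monoG_inj h
    obtain ⟨rfl, rfl⟩ := xp_inj _ _ _ _ h2
    rfl
  have hr : (Bgrp : Set (GL (Fin 3) ℂ)) = f '' Set.univ := by
    ext g
    constructor
    · rintro ⟨σ, x, hx, rfl⟩
      obtain ⟨d, c, rfl⟩ := xp_surj hx
      exact ⟨(σ, d, c), trivial, rfl⟩
    · rintro ⟨⟨σ, d, c⟩, -, rfl⟩
      exact ⟨σ, _, xp_cond d c, rfl⟩
  rw [hr, Set.ncard_image_of_injective _ hf, Set.ncard_univ, Nat.card_eq_fintype_card]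
  simp [Fintype.card_perm, Nat.factorial]

/-- `Z` as a monomial element. -/
def Zm : GL (Fin 3) ℂ := monoG 1 ![0, 3, 6]

lemma monoG_perm_mul (σ τ : Equiv.Perm (Fin 3)) :
    monoG (σ * τ) 0 = monoG σ 0 * monoG τ 0 := by
  rw [monoG_mul]; congr 1

lemma monoG_perm_pow (σ : Equiv.Perm (Fin 3)) (k : ℕ) : monoG (σ ^ k) 0 = monoG σ 0 ^ k := by
  induction k with
  | zero => simp [monoG_one]
  | succ k ih => rw [pow_succ, pow_succ, monoG_perm_mul, ih]

lemma perm_gen : ∀ σ : Equiv.Perm (Fin 3), ∃ (k : Fin 3) (e : Fin 2),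
    σ = (finRotate 3) ^ (k : ℕ) * (Equiv.swap 1 2) ^ (e : ℕ) := by decide

lemma B_induct (p : Submonoid (GL (Fin 3) ℂ)) (hX : Xg ∈ p) (hH : Hg * Hg ∈ p) (hS : Sg ∈ p)
    (hZ : Zm ∈ p) {b : GL (Fin 3) ℂ} (hb : b ∈ Bgrp) : b ∈ p := by
  obtain ⟨σ, x, hx, rfl⟩ := hb
  obtain ⟨d, c, rfl⟩ := xp_surj hx
  obtain ⟨k, e, rfl⟩ := perm_gen σ
  have h : monoG ((finRotate 3) ^ (k : ℕ) * (Equiv.swap 1 2) ^ (e : ℕ)) (xp d c) =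
      Xg ^ (k : ℕ) * (Hg * Hg) ^ (e : ℕ) * (Sg ^ (d : ℕ) * Zm ^ (c : ℕ)) := by
    rw [X_mono, H2_mono, S_mono, Zm, ← monoG_perm_pow, ← monoG_perm_pow, ← monoG_perm_mul,
      monoG_one_pow, monoG_one_pow, monoG_mul, monoG_mul, mul_one, mul_one]
    congr 1
    funext i
    fin_cases i <;> simp [xp]
  rw [h]
  exact p.mul_mem (p.mul_mem (p.pow_mem hX _) (p.pow_mem hH _))
    (p.mul_mem (p.pow_mem hS _) (p.pow_mem hZ _))

lemma S_mem_B : Sg ∈ Bgrp := ⟨1, _, by decide, S_mono⟩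
lemma X_mem_B : Xg ∈ Bgrp := ⟨_, _, by decide, X_mono⟩
lemma H2_mem_B : Hg * Hg ∈ Bgrp := ⟨_, _, by decide, H2_mono⟩
lemma Zm_mem_B : Zm ∈ Bgrp := ⟨_, _, by decide, rfl⟩

lemma H4 : Hg * Hg * (Hg * Hg) = 1 := by
  rw [H2_mono, monoG_mul, ← monoG_one]
  congr 1
  · decide

lemma S9 : Sg ^ 9 = 1 := by
  rw [S_mono, monoG_one_pow, ← monoG_one]
  congr 1
  decide

lemma T9 : Tg ^ 9 = 1 := by
  rw [T_mono, monoG_one_pow, ← monoG_one]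
  congr 1
  decide

lemma H_pow4 : Hg ^ 4 = 1 := by rw [← H4, pow_succ, pow_succ, pow_two]; simp only [mul_assoc]

lemma SZ : Zm = Sg ^ 8 * ((Hg * Hg) * (Sg * (Hg * Hg))) := by
  rw [H2_mono, S_mono, Zm, monoG_one_pow, monoG_mul, monoG_mul, monoG_mul]
  congr 1
  · decide
  · decide

lemma X_eq : Xg = Hg * (Zm * (Zm * (Hg * (Hg * Hg)))) := by
  have h : monoG 1 ![0, 6, 3] = Zm * Zm := by
    rw [Zm, monoG_mul]
    congr 1
    decide
  have h2 := XH_comm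
  rw [h] at h2
  calc Xg = Xg * Hg * (Hg * (Hg * Hg)) := by
        rw [mul_assoc, ← mul_assoc Hg, H4, mul_one]
    _ = _ := by rw [h2]; group

lemma fin_closure (s : Set (GL (Fin 3) ℂ)) (hs : ∀ x ∈ s, ∃ m : ℕ, x ^ m = x⁻¹)
    (p : GL (Fin 3) ℂ → Prop) (h1 : p 1) (hm : ∀ x ∈ s, ∀ y, p y → p (x * y)) :
    ∀ y ∈ Subgroup.closure s, p y := by
  intro y hy
  induction hy using Subgroup.closure_induction_left with
  | one => exact h1
  | mul_left x hx y hy ih => exact hm x hx y ih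
  | inv_mul_cancel x hx y hy ih =>
    obtain ⟨m, hmx⟩ := hs x hx
    rw [← hmx]
    clear hmx
    induction m with
    | zero => simpa using ih
    | succ m ihm => rw [pow_succ', mul_assoc]; exact hm x hx _ ihm

lemma Hinv : Hg ^ 3 = Hg⁻¹ := by
  rw [eq_inv_iff_mul_eq_one, ← pow_succ]; exact H_pow4
lemma Sinv : Sg ^ 8 = Sg⁻¹ := by
  rw [eq_inv_iff_mul_eq_one, ← pow_succ]; exact S9
lemma Tinv : Tg ^ 8 = Tg⁻¹ := by
  rw [eq_inv_iff_mul_eq_one, ← pow_succ]; exact T9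

lemma Cliff_induct (p : GL (Fin 3) ℂ → Prop) (h1 : p 1) (hH : ∀ y, p y → p (Hg * y))
    (hS : ∀ y, p y → p (Sg * y)) : ∀ y ∈ Cliff, p y := by
  apply fin_closure _ _ p h1
  · rintro x (rfl | rfl)
    · exact hH
    · exact hS
  · rintro x (rfl | rfl)
    · exact ⟨3, Hinv⟩
    · exact ⟨8, Sinv⟩

lemma CliffT_induct (p : GL (Fin 3) ℂ → Prop) (h1 : p 1) (hH : ∀ y, p y → p (Hg * y))
    (hS : ∀ y, p y → p (Sg * y)) (hT : ∀ y, p y → p (Tg * y)) : ∀ y ∈ CliffT, p y := by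
  apply fin_closure _ _ p h1
  · rintro x (rfl | rfl | rfl)
    · exact hH
    · exact hS
    · exact hT
  · rintro x (rfl | rfl | rfl)
    · exact ⟨3, Hinv⟩
    · exact ⟨8, Sinv⟩
    · exact ⟨8, Tinv⟩

lemma H_mem : Hg ∈ Cliff := Subgroup.subset_closure (by simp)
lemma S_mem : Sg ∈ Cliff := Subgroup.subset_closure (by simp)

lemma Zm_mem : Zm ∈ Cliff := by
  rw [SZ]
  have h2 := Cliff.mul_mem H_mem H_mem
  exact Cliff.mul_mem (Cliff.pow_mem S_mem _) (Cliff.mul_mem h2 (Cliff.mul_mem S_mem h2))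

lemma X_mem : Xg ∈ Cliff := by
  rw [X_eq]
  exact Cliff.mul_mem H_mem (Cliff.mul_mem Zm_mem (Cliff.mul_mem Zm_mem
    (Cliff.mul_mem H_mem (Cliff.mul_mem H_mem H_mem))))

lemma B_le : Bgrp ≤ Cliff := fun _ hb =>
  B_induct Cliff.toSubmonoid X_mem (Cliff.mul_mem H_mem H_mem) S_mem Zm_mem hb

/-- Coset representatives of the Clifford group modulo `B`. -/
def hh : Fin 4 → GL (Fin 3) ℂ := ![1, Hg, Sg * Hg, Sg * (Sg * Hg)]

lemma hh_mem : ∀ i, hh i ∈ Cliff := by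
  intro i
  fin_cases i
  · exact Cliff.one_mem
  · exact H_mem
  · exact Cliff.mul_mem S_mem H_mem
  · exact Cliff.mul_mem S_mem (Cliff.mul_mem S_mem H_mem)

lemma SSS : Sg * (Sg * (Sg * Hg)) = Hg * monoG 1 ![6, 6, 6] := by
  have h : Sg * (Sg * Sg) = monoG 1 ![6, 6, 6] := by
    rw [S_mono, monoG_mul, monoG_mul]
    congr 1
    decide
  have h2 : (monoG 1 ![6, 6, 6]).val = (ζ ^ 6) • 1 := by
    show mono _ _ = _
    ext i j
    fin_cases i <;> fin_cases j <;> simp [mono, ze, show (6 : ZMod 9).val = 6 from rfl]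
  rw [← mul_assoc, ← mul_assoc, mul_assoc Sg, h]
  apply Units.ext
  rw [Units.val_mul, Units.val_mul, h2]
  simp

lemma Cliff_decomp : ∀ c ∈ Cliff, ∃ i, ∃ b ∈ Bgrp, c = hh i * b := by
  apply Cliff_induct
  · exact ⟨0, 1, Bgrp.one_mem, by simp [hh]⟩
  · rintro _ ⟨i, b, hb, rfl⟩
    fin_cases i
    · exact ⟨1, b, hb, by simp [hh]⟩
    · exact ⟨0, _, Bgrp.mul_mem H2_mem_B hb, by simp [hh, mul_assoc]⟩
    · refine ⟨3, _, Bgrp.mul_mem ⟨Equiv.swap 1 2, ![4, 4, 1], by decide, rfl⟩ hb, ?_⟩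
      show Hg * (Sg * Hg * b) = Sg * (Sg * Hg) * (_ * b)
      rw [← mul_assoc, HSH]
      simp only [mul_assoc]
    · refine ⟨2, _, Bgrp.mul_mem ⟨finRotate 3, ![5, 8, 5], by decide, rfl⟩ hb, ?_⟩
      show Hg * (Sg * (Sg * Hg) * b) = Sg * Hg * (_ * b)
      rw [← mul_assoc, HSSH]
      simp only [mul_assoc]
  · rintro _ ⟨i, b, hb, rfl⟩
    fin_cases i
    · exact ⟨0, _, Bgrp.mul_mem S_mem_B hb, by simp [hh]⟩
    · exact ⟨2, b, hb, by simp [hh, mul_assoc]⟩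
    · exact ⟨3, b, hb, by simp [hh, mul_assoc]⟩
    · refine ⟨1, _, Bgrp.mul_mem ⟨1, ![6, 6, 6], by decide, rfl⟩ hb, ?_⟩
      show Sg * (Sg * (Sg * Hg) * b) = Hg * (_ * b)
      rw [← mul_assoc, SSS]
      simp only [mul_assoc]

/-! ### Residues of Clifford elements -/

lemma V_Cliff : ∀ c ∈ Cliff, ∃ r₀ r₁, V 0 c r₀ r₁ ∧ r₀ 0 * r₁ 1 - r₀ 1 * r₁ 0 = 1 := by
  apply Cliff_induct
  · exact ⟨_, _, V_one, by decide⟩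
  · rintro y ⟨r₀, r₁, h, hd⟩
    refine ⟨_, _, V_H h, ?_⟩
    simp only [Pi.neg_apply]
    linear_combination hd
  · rintro y ⟨r₀, r₁, h, hd⟩
    refine ⟨_, _, V_S h, ?_⟩
    simp only [Pi.sub_apply]
    linear_combination hd

lemma three_zero : (3 : ZMod 3) = 0 := by decide

lemma V_H2 {n : ℕ} {U : GL (Fin 3) ℂ} {r₀ r₁ : Fin 3 → ZMod 3} (h : V n U r₀ r₁) :
    V n (Hg * Hg * U) (-r₀) (-r₁) := by
  rw [mul_assoc]
  exact V_H (V_H h)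

lemma V_Spow {n : ℕ} {U : GL (Fin 3) ℂ} {r₀ r₁ : Fin 3 → ZMod 3} (h : V n U r₀ r₁) (k : ℕ) :
    V n (Sg ^ k * U) r₀ (r₁ - (k : ZMod 3) • r₀) := by
  induction k with
  | zero => simpa using h
  | succ k ih =>
    have := V_S ih
    rw [pow_succ', mul_assoc]
    convert this using 1
    push_cast
    module

lemma V_Zm {n : ℕ} {U : GL (Fin 3) ℂ} {r₀ r₁ : Fin 3 → ZMod 3} (h : V n U r₀ r₁) :
    V n (Zm * U) r₀ r₁ := by
  have := V_Spow (V_H2 (V_S (V_H2 h))) 8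
  rw [SZ]
  simp only [mul_assoc] at this ⊢
  convert this using 1
  · simp
  · funext j
    simp only [Pi.sub_apply, Pi.neg_apply, Pi.smul_apply, smul_eq_mul]
    push_cast
    linear_combination (3 * r₀ j) * three_zero

lemma V_X {n : ℕ} {U : GL (Fin 3) ℂ} {r₀ r₁ : Fin 3 → ZMod 3} (h : V n U r₀ r₁) :
    V n (Xg * U) r₀ r₁ := by
  have := V_H (V_Zm (V_Zm (V_H (V_H2 h))))
  rw [X_eq]
  simp only [mul_assoc] at this ⊢
  simpa using this

/-- Elements acting on residues by lower triangular matrices. -/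
def Qmon : Submonoid (GL (Fin 3) ℂ) where
  carrier := {g | ∀ n U r₀ r₁, V n U r₀ r₁ →
    ∃ s t : ZMod 3, s ≠ 0 ∧ V n (g * U) (s • r₀) (s • r₁ + t • r₀)}
  one_mem' := by
    intro n U r₀ r₁ h
    exact ⟨1, 0, by decide, by simpa using h⟩
  mul_mem' := by
    intro a b ha hb n U r₀ r₁ h
    obtain ⟨s, t, hs, h1⟩ := hb n U r₀ r₁ h
    obtain ⟨s', t', hs', h2⟩ := ha _ _ _ _ h1
    refine ⟨s' * s, s' * t + t' * s, mul_ne_zero hs' hs, ?_⟩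
    rw [mul_assoc]
    convert h2 using 1 <;> module

lemma V_B {b : GL (Fin 3) ℂ} (hb : b ∈ Bgrp) {n : ℕ} {U : GL (Fin 3) ℂ} {r₀ r₁ : Fin 3 → ZMod 3}
    (h : V n U r₀ r₁) :
    ∃ s t : ZMod 3, s ≠ 0 ∧ V n (b * U) (s • r₀) (s • r₁ + t • r₀) := by
  have : b ∈ Qmon := by
    apply B_induct Qmon _ _ _ _ hb
    · intro n U r₀ r₁ h
      exact ⟨1, 0, by decide, by simpa using V_X h⟩
    · intro n U r₀ r₁ h
      exact ⟨-1, 0, by decide, by simpa using V_H2 h⟩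
    · intro n U r₀ r₁ h
      exact ⟨1, -1, by decide, by simpa [sub_eq_add_neg] using V_S h⟩
    · intro n U r₀ r₁ h
      exact ⟨1, 0, by decide, by simpa using V_Zm h⟩
  exact this n U r₀ r₁ h

lemma V_B0 {b : GL (Fin 3) ℂ} (hb : b ∈ Bgrp) :
    ∃ r₀ r₁, V 0 b r₀ r₁ ∧ r₀ 1 = 0 ∧ r₁ 1 ≠ 0 := by
  obtain ⟨s, t, hs, h⟩ := V_B hb V_one
  rw [mul_one] at h
  exact ⟨_, _, h, by simp, by simpa using hs⟩

/-- First residue coefficient of `hh i`. -/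
def pc : Fin 4 → ZMod 3 := ![0, 1, 1, 1]
/-- Second residue coefficient of `hh i`. -/
def qc : Fin 4 → ZMod 3 := ![1, 0, -1, 1]

lemma V_hh (i : Fin 4) {n : ℕ} {U : GL (Fin 3) ℂ} {r₀ r₁ : Fin 3 → ZMod 3} (h : V n U r₀ r₁) :
    ∃ r₀' r₁', V n (hh i * U) r₀' r₁' ∧
      ∀ j, r₀ j = 0 → r₀' j = pc i * r₁ j ∧ r₁' j = qc i * r₁ j := by
  fin_cases i
  · exact ⟨_, _, by simpa [hh] using h, fun j hj => by simp [pc, qc, hj]⟩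
  · exact ⟨_, _, by simpa [hh] using V_H h, fun j hj => by simp [pc, qc, hj]⟩
  · refine ⟨_, _, by simpa [hh, mul_assoc] using V_S (V_H h), fun j hj => by simp [pc, qc, hj]⟩
  · refine ⟨_, _, by simpa [hh, mul_assoc] using V_S (V_S (V_H h)), fun j hj => ?_⟩
    simp only [Pi.sub_apply, Pi.neg_apply, hj]
    refine ⟨by simp [pc], ?_⟩
    show _ = 1 * r₁ j
    linear_combination -(r₁ j) * three_zero

lemma pq_inj : ∀ i k x y, x ≠ 0 → pc i * x = pc k * y → qc i * x = qc k * y → i = k := by decide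

lemma hh_inj {n : ℕ} {U U' : GL (Fin 3) ℂ} {r₀ r₁ s₀ s₁ : Fin 3 → ZMod 3} (h : V n U r₀ r₁)
    (h' : V n U' s₀ s₁) {j : Fin 3} (hr : r₀ j = 0) (hs : s₀ j = 0) (hr1 : r₁ j ≠ 0)
    {i k : Fin 4} (he : hh i * U = hh k * U') : i = k := by
  obtain ⟨a₀, a₁, hv, ha⟩ := V_hh i h
  obtain ⟨b₀, b₁, hw, hb⟩ := V_hh k h'
  rw [he] at hv
  obtain ⟨rfl, rfl⟩ := V_eq hv hw
  obtain ⟨h1, h2⟩ := ha j hr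
  obtain ⟨h3, h4⟩ := hb j hs
  exact pq_inj i k _ _ hr1 (h1.symm.trans h3) (h2.symm.trans h4)

lemma hhB_inj {i k : Fin 4} {b b' : GL (Fin 3) ℂ} (hb : b ∈ Bgrp) (hb' : b' ∈ Bgrp)
    (he : hh i * b = hh k * b') : i = k := by
  obtain ⟨r₀, r₁, h, h0, h1⟩ := V_B0 hb
  obtain ⟨s₀, s₁, h', h0', h1'⟩ := V_B0 hb'
  exact hh_inj h h' h0 h0' h1 he

lemma B_finite : (Bgrp : Set (GL (Fin 3) ℂ)).Finite := by
  apply Set.finite_of_ncard_ne_zero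
  rw [B_ncard]
  norm_num

lemma Cliff_eq : (Cliff : Set (GL (Fin 3) ℂ)) =
    (fun p : Fin 4 × GL (Fin 3) ℂ => hh p.1 * p.2) '' (Set.univ ×ˢ (Bgrp : Set (GL (Fin 3) ℂ))) := by
  ext c
  constructor
  · intro hc
    obtain ⟨i, b, hb, rfl⟩ := Cliff_decomp c hc
    exact ⟨(i, b), ⟨trivial, hb⟩, rfl⟩
  · rintro ⟨⟨i, b⟩, ⟨-, hb⟩, rfl⟩
    exact Cliff.mul_mem (hh_mem i) (B_le hb)

lemma Cliff_ncard : (Cliff : Set (GL (Fin 3) ℂ)).ncard = 648 := by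
  rw [Cliff_eq, Set.InjOn.ncard_image, Set.ncard_prod, B_ncard, Set.ncard_univ]
  · simp
  · rintro ⟨i, b⟩ ⟨-, hb⟩ ⟨k, b'⟩ ⟨-, hb'⟩ h
    obtain rfl := hhB_inj hb hb' h
    simpa using h

lemma Cliff_finite : (Cliff : Set (GL (Fin 3) ℂ)).Finite := by
  rw [Cliff_eq]
  exact (Set.finite_univ.prod B_finite).image _

/-! ### The gates `T` and `T⁻¹` -/

/-- Exponents of `T` and its inverse. -/
def texp (e : Bool) : Fin 3 → ZMod 9 := bif e then ![0, 1, 8] else ![0, 8, 1]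

/-- `T` or its inverse. -/
def Tz (e : Bool) : GL (Fin 3) ℂ := monoG 1 (texp e)

lemma Tz_true : Tz true = Tg := T_mono.symm

lemma Tz_not (e : Bool) : Tz (!e) * Tz e = 1 := by
  rw [Tz, Tz, monoG_mul, ← monoG_one]
  congr 1
  revert e
  decide

lemma Tz_false : Tz false = Tg⁻¹ := by
  rw [eq_inv_iff_mul_eq_one, ← Tz_true]
  exact Tz_not true

lemma TT : Tz true * Tz true = Zm * Tz false := by
  rw [Tz, Tz, Zm, monoG_mul, monoG_mul]
  congr 1
  decide

lemma Tz_false_eq : Tz false = Hg * Hg * (Tg * (Hg * Hg)) := by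
  rw [H2_mono, T_mono, Tz, monoG_mul, monoG_mul]
  congr 1
  · decide
  · decide

lemma texp_comm : ∀ (e : Bool) (σ : Equiv.Perm (Fin 3)), ∃ e' : Bool,
    pcond (texp (!e') ∘ σ + texp e) := by decide

lemma B_Tz {b : GL (Fin 3) ℂ} (hb : b ∈ Bgrp) (e : Bool) :
    ∃ e', ∃ b' ∈ Bgrp, b * Tz e = Tz e' * b' := by
  obtain ⟨σ, x, hx, rfl⟩ := hb
  obtain ⟨e', he⟩ := texp_comm e σ
  refine ⟨e', monoG σ (x + (texp (!e') ∘ σ + texp e)), ⟨σ, _, pcond_add hx he, rfl⟩, ?_⟩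
  have h1 : Tz (!e') * (monoG σ x * Tz e) = monoG σ (x + (texp (!e') ∘ σ + texp e)) := by
    rw [Tz, Tz, monoG_mul, monoG_mul]
    congr 1
    funext i
    simp only [Pi.add_apply, Function.comp, Equiv.Perm.coe_mul, Equiv.Perm.coe_one, id]
    ring
  have h2 := Tz_not (!e')
  rw [Bool.not_not] at h2
  rw [← h1, ← mul_assoc, h2, one_mul]

lemma V_Tz (e : Bool) {n : ℕ} {U : GL (Fin 3) ℂ} {r₀ r₁ : Fin 3 → ZMod 3} (h : V n U r₀ r₁) :
    V (n + 1) (Tz e * U) 0 r₀ := by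
  cases e
  · rw [Tz_false]; exact V_Ti h
  · rw [Tz_true]; exact V_T h

/-! ### Canonical forms -/

/-- Canonical forms with `n` occurrences of `T` and nontrivial leading syllable. -/
def NS : ℕ → Set (GL (Fin 3) ℂ)
  | 0 => Cliff
  | n + 1 => {g | ∃ i : Fin 3, ∃ e, ∃ y ∈ NS n, g = hh i.succ * (Tz e * y)}

/-- Canonical forms with `n + 1` occurrences of `T` starting with `T` or its inverse. -/
def YS (n : ℕ) : Set (GL (Fin 3) ℂ) := {g | ∃ e, ∃ y ∈ NS n, g = Tz e * y}

/-- Canonical forms with `n` occurrences of `T`. -/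
def FS : ℕ → Set (GL (Fin 3) ℂ)
  | 0 => Cliff
  | n + 1 => {g | ∃ i : Fin 4, ∃ y ∈ YS n, g = hh i * y}

lemma pc_succ : ∀ i : Fin 3, pc i.succ = 1 := by decide

lemma NS_V : ∀ (n : ℕ) (g : GL (Fin 3) ℂ), g ∈ NS n → ∃ r₀ r₁, V n g r₀ r₁ ∧ r₀ ≠ 0 := by
  intro n
  induction n with
  | zero =>
    intro g hg
    obtain ⟨r₀, r₁, h, hd⟩ := V_Cliff g hg
    refine ⟨r₀, r₁, h, ?_⟩
    rintro rfl
    simp at hd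
  | succ n ih =>
    rintro g ⟨i, e, y, hy, rfl⟩
    obtain ⟨r₀, r₁, h, h0⟩ := ih y hy
    obtain ⟨a₀, a₁, ha, hb⟩ := V_hh i.succ (V_Tz e h)
    refine ⟨a₀, a₁, ha, ?_⟩
    rintro rfl
    apply h0
    funext j
    have := (hb j rfl).1
    rw [pc_succ, one_mul] at this
    exact this.symm

lemma YS_V {n : ℕ} {g : GL (Fin 3) ℂ} (hg : g ∈ YS n) : ∃ r₁, V (n + 1) g 0 r₁ ∧ r₁ ≠ 0 := by
  obtain ⟨e, y, hy, rfl⟩ := hg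
  obtain ⟨r₀, r₁, h, h0⟩ := NS_V n y hy
  exact ⟨r₀, V_Tz e h, h0⟩

lemma pq_ne : ∀ i x, pc i * x = 0 → qc i * x = 0 → x = 0 := by decide

lemma FS_V {n : ℕ} {g : GL (Fin 3) ℂ} (hg : g ∈ FS n) :
    ∃ r₀ r₁, V n g r₀ r₁ ∧ ¬ (r₀ = 0 ∧ r₁ = 0) := by
  cases n with
  | zero =>
    obtain ⟨r₀, r₁, h, h0⟩ := NS_V 0 g hg
    exact ⟨r₀, r₁, h, fun h' => h0 h'.1⟩
  | succ n =>
    obtain ⟨i, y, hy, rfl⟩ := hg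
    obtain ⟨r₁, h, h0⟩ := YS_V hy
    obtain ⟨a₀, a₁, ha, hb⟩ := V_hh i h
    refine ⟨a₀, a₁, ha, ?_⟩
    rintro ⟨rfl, rfl⟩
    apply h0
    funext j
    obtain ⟨h1, h2⟩ := hb j rfl
    exact pq_ne i _ h1.symm h2.symm

lemma FS_disj {n m : ℕ} {g : GL (Fin 3) ℂ} (hn : g ∈ FS n) (hm : g ∈ FS m) : n = m := by
  obtain ⟨r₀, r₁, h, h0⟩ := FS_V hn
  obtain ⟨s₀, s₁, h', h0'⟩ := FS_V hm
  rcases lt_trichotomy n m with hl | rfl | hl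
  · exact absurd (V_lt hl h h') h0'
  · rfl
  · exact absurd (V_lt hl h' h) h0

lemma Tz_inj_aux {n : ℕ} {y y' : GL (Fin 3) ℂ} (hy : y ∈ NS n) (hy' : y' ∈ NS n) :
    Tz true * y ≠ Tz false * y' := by
  intro h
  have h1 : Tz true * y' = Zm * y := by
    have h2 : y' = Tz true * (Tz true * y) := by
      rw [h, ← mul_assoc]
      have := Tz_not false
      rw [Bool.not_false] at this
      rw [this, one_mul]
    have h3 := Tz_not true
    rw [Bool.not_true] at h3
    rw [h2, ← mul_assoc, TT, mul_assoc, ← mul_assoc (Tz false), h3, one_mul]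
  obtain ⟨r₀, r₁, hv, -⟩ := NS_V n y hy
  obtain ⟨s₀, s₁, hw, h0⟩ := NS_V n y' hy'
  have hw' := V_Tz true hw
  rw [h1] at hw'
  exact h0 (V_lt (Nat.lt_succ_self n) (V_Zm hv) hw').2

lemma Tz_inj {n : ℕ} {y y' : GL (Fin 3) ℂ} (hy : y ∈ NS n) (hy' : y' ∈ NS n) {e e' : Bool}
    (h : Tz e * y = Tz e' * y') : e = e' := by
  cases e <;> cases e'
  · rfl
  · exact absurd h.symm (Tz_inj_aux hy' hy)
  · exact absurd h (Tz_inj_aux hy hy')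
  · rfl

lemma hhY_inj {n : ℕ} {y y' : GL (Fin 3) ℂ} (hy : y ∈ YS n) (hy' : y' ∈ YS n) {i k : Fin 4}
    (h : hh i * y = hh k * y') : i = k := by
  obtain ⟨r₁, hv, h0⟩ := YS_V hy
  obtain ⟨s₁, hw, -⟩ := YS_V hy'
  obtain ⟨j, hj⟩ := Function.ne_iff.mp h0
  exact hh_inj hv hw (j := j) rfl rfl hj h

lemma YS_eq (n : ℕ) : YS n =
    (fun p : Bool × GL (Fin 3) ℂ => Tz p.1 * p.2) '' (Set.univ ×ˢ NS n) := by
  ext g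
  constructor
  · rintro ⟨e, y, hy, rfl⟩
    exact ⟨(e, y), ⟨trivial, hy⟩, rfl⟩
  · rintro ⟨⟨e, y⟩, ⟨-, hy⟩, rfl⟩
    exact ⟨e, y, hy, rfl⟩

lemma YS_ncard (n : ℕ) : (YS n).ncard = 2 * (NS n).ncard := by
  rw [YS_eq, Set.InjOn.ncard_image, Set.ncard_prod, Set.ncard_univ]
  · simp
  · rintro ⟨i, b⟩ ⟨-, hb⟩ ⟨k, b'⟩ ⟨-, hb'⟩ h
    obtain rfl := Tz_inj hb hb' h
    simpa using h

lemma NS_eq (n : ℕ) : NS (n + 1) =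
    (fun p : Fin 3 × GL (Fin 3) ℂ => hh p.1.succ * p.2) '' (Set.univ ×ˢ YS n) := by
  ext g
  constructor
  · rintro ⟨i, e, y, hy, rfl⟩
    exact ⟨(i, _), ⟨trivial, e, y, hy, rfl⟩, rfl⟩
  · rintro ⟨⟨i, _⟩, ⟨-, e, y, hy, rfl⟩, rfl⟩
    exact ⟨i, e, y, hy, rfl⟩

lemma NS_ncard_succ (n : ℕ) : (NS (n + 1)).ncard = 3 * (YS n).ncard := by
  rw [NS_eq, Set.InjOn.ncard_image, Set.ncard_prod, Set.ncard_univ]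
  · simp
  · rintro ⟨i, b⟩ ⟨-, hb⟩ ⟨k, b'⟩ ⟨-, hb'⟩ h
    obtain rfl := Fin.succ_injective _ (hhY_inj hb hb' h)
    simpa using h

lemma FS_eq (n : ℕ) : FS (n + 1) =
    (fun p : Fin 4 × GL (Fin 3) ℂ => hh p.1 * p.2) '' (Set.univ ×ˢ YS n) := by
  ext g
  constructor
  · rintro ⟨i, y, hy, rfl⟩
    exact ⟨(i, y), ⟨trivial, hy⟩, rfl⟩
  · rintro ⟨⟨i, y⟩, ⟨-, hy⟩, rfl⟩
    exact ⟨i, y, hy, rfl⟩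

lemma FS_ncard_succ (n : ℕ) : (FS (n + 1)).ncard = 4 * (YS n).ncard := by
  rw [FS_eq, Set.InjOn.ncard_image, Set.ncard_prod, Set.ncard_univ]
  · simp
  · rintro ⟨i, b⟩ ⟨-, hb⟩ ⟨k, b'⟩ ⟨-, hb'⟩ h
    obtain rfl := hhY_inj hb hb' h
    simpa using h

lemma NS_ncard (n : ℕ) : (NS n).ncard = 648 * 6 ^ n := by
  induction n with
  | zero => exact Cliff_ncard
  | succ n ih => rw [NS_ncard_succ, YS_ncard, ih]; ring

lemma FS_ncard (n : ℕ) : (FS (n + 1)).ncard = 5184 * 6 ^ n := by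
  rw [FS_ncard_succ, YS_ncard, NS_ncard]; ring

lemma FS_finite (n : ℕ) : (FS n).Finite := by
  cases n with
  | zero => exact Cliff_finite
  | succ n =>
    apply Set.finite_of_ncard_ne_zero
    rw [FS_ncard]
    positivity

/-! ### Closure properties -/

lemma hh_succ_notB {i : Fin 3} (h : hh i.succ ∈ Bgrp) : False := by
  have h1 : hh i.succ * 1 = hh 0 * hh i.succ := by simp [hh]
  exact Fin.succ_ne_zero i (hhB_inj Bgrp.one_mem h h1)

lemma B_NS {b : GL (Fin 3) ℂ} (hb : b ∈ Bgrp) {n : ℕ} {y : GL (Fin 3) ℂ} (hy : y ∈ NS n) :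
    b * y ∈ NS n := by
  induction n generalizing b y with
  | zero => exact Cliff.mul_mem (B_le hb) hy
  | succ n ih =>
    obtain ⟨i, e, y, hy, rfl⟩ := hy
    obtain ⟨k, b', hb', hk⟩ := Cliff_decomp _ (Cliff.mul_mem (B_le hb) (hh_mem i.succ))
    have hk0 : k ≠ 0 := by
      rintro rfl
      apply hh_succ_notB (i := i)
      have h1 : b * hh i.succ = b' := by rw [hk]; simp [hh]
      rw [← Subgroup.mul_mem_cancel_left _ hb, h1]
      exact hb'
    obtain ⟨k, rfl⟩ := Fin.exists_succ_eq_of_ne_zero hk0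
    obtain ⟨e', b'', hb'', he⟩ := B_Tz hb' e
    refine ⟨k, e', b'' * y, ih hb'' hy, ?_⟩
    rw [← mul_assoc, hk, mul_assoc, ← mul_assoc b', he, mul_assoc]

lemma B_YS {b : GL (Fin 3) ℂ} (hb : b ∈ Bgrp) {n : ℕ} {y : GL (Fin 3) ℂ} (hy : y ∈ YS n) :
    b * y ∈ YS n := by
  obtain ⟨e, y, hy, rfl⟩ := hy
  obtain ⟨e', b'', hb'', he⟩ := B_Tz hb e
  refine ⟨e', b'' * y, B_NS hb'' hy, ?_⟩
  rw [← mul_assoc, he, mul_assoc]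

lemma C_FS {c : GL (Fin 3) ℂ} (hc : c ∈ Cliff) {n : ℕ} {y : GL (Fin 3) ℂ} (hy : y ∈ FS n) :
    c * y ∈ FS n := by
  cases n with
  | zero => exact Cliff.mul_mem hc hy
  | succ n =>
    obtain ⟨i, y, hy, rfl⟩ := hy
    obtain ⟨k, b', hb', hk⟩ := Cliff_decomp _ (Cliff.mul_mem hc (hh_mem i))
    refine ⟨k, b' * y, B_YS hb' hy, ?_⟩
    rw [← mul_assoc, hk, mul_assoc]

lemma YS_FS {n : ℕ} {y : GL (Fin 3) ℂ} (hy : y ∈ YS n) : y ∈ FS (n + 1) :=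
  ⟨0, y, hy, by simp [hh]⟩

lemma NS_FS {n : ℕ} {y : GL (Fin 3) ℂ} (hy : y ∈ NS n) : y ∈ FS n := by
  cases n with
  | zero => exact hy
  | succ n =>
    obtain ⟨i, e, y, hy, rfl⟩ := hy
    exact ⟨i.succ, _, ⟨e, y, hy, rfl⟩, rfl⟩

lemma T_NS {n : ℕ} {y : GL (Fin 3) ℂ} (hy : y ∈ NS n) : Tg * y ∈ FS (n + 1) :=
  YS_FS ⟨true, y, hy, by rw [Tz_true]⟩

lemma T_FS {n : ℕ} {y : GL (Fin 3) ℂ} (hy : y ∈ FS n) : ∃ j ≤ n + 1, Tg * y ∈ FS j := by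
  cases n with
  | zero => exact ⟨1, le_rfl, T_NS (n := 0) hy⟩
  | succ n =>
    obtain ⟨i, _, ⟨e, y, hy, rfl⟩, rfl⟩ := hy
    rcases Fin.eq_zero_or_eq_succ i with rfl | ⟨k, rfl⟩
    · have h0 : hh 0 * (Tz e * y) = Tz e * y := by simp [hh]
      rw [h0]
      cases e
      · refine ⟨n, by omega, ?_⟩
        have := Tz_not false
        rw [Bool.not_false] at this
        rw [← mul_assoc, ← Tz_true, this, one_mul]
        exact NS_FS hy
      · refine ⟨n + 1, by omega, ?_⟩
        rw [← mul_assoc, ← Tz_true, TT, mul_assoc]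
        exact YS_FS (B_YS Zm_mem_B ⟨false, y, hy, rfl⟩)
    · exact ⟨n + 2, le_rfl, T_NS (n := n + 1) ⟨k, e, y, hy, rfl⟩⟩

/-! ### Words -/

lemma word_FS (w : List Letter) : ∃ j ≤ w.count Letter.T, wordProd w ∈ FS j := by
  induction w with
  | nil => exact ⟨0, le_rfl, Cliff.one_mem⟩
  | cons a w ih =>
    obtain ⟨j, hj, hw⟩ := ih
    have hc : wordProd (a :: w) = a.g * wordProd w := by simp [wordProd]
    rw [hc]
    cases a with
    | H => exact ⟨j, by simpa using hj, C_FS H_mem hw⟩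
    | S => exact ⟨j, by simpa using hj, C_FS S_mem hw⟩
    | T =>
      obtain ⟨k, hk, hT⟩ := T_FS hw
      exact ⟨k, by rw [List.count_cons_self]; omega, hT⟩

/-- Being represented by a word with `k` occurrences of `T`. -/
def Wd (k : ℕ) (g : GL (Fin 3) ℂ) : Prop := ∃ w : List Letter, wordProd w = g ∧ w.count Letter.T = k

lemma Wd_mul {a b : ℕ} {g h : GL (Fin 3) ℂ} (hg : Wd a g) (hh : Wd b h) : Wd (a + b) (g * h) := by
  obtain ⟨w, rfl, rfl⟩ := hg
  obtain ⟨v, rfl, rfl⟩ := hh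
  exact ⟨w ++ v, by simp [wordProd], by simp⟩

lemma Wd_H : Wd 0 Hg := ⟨[.H], by simp [wordProd, Letter.g], by decide⟩
lemma Wd_S : Wd 0 Sg := ⟨[.S], by simp [wordProd, Letter.g], by decide⟩
lemma Wd_T : Wd 1 Tg := ⟨[.T], by simp [wordProd, Letter.g], by decide⟩

lemma Wd_Cliff : ∀ c ∈ Cliff, Wd 0 c := by
  apply Cliff_induct
  · exact ⟨[], by simp [wordProd], by simp⟩
  · intro y hy
    exact Wd_mul Wd_H hy
  · intro y hy
    exact Wd_mul Wd_S hy

lemma Wd_Tz (e : Bool) : Wd 1 (Tz e) := by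
  cases e
  · rw [Tz_false_eq]
    exact Wd_mul (Wd_mul Wd_H Wd_H) (Wd_mul Wd_T (Wd_mul Wd_H Wd_H))
  · rw [Tz_true]
    exact Wd_T

lemma Wd_NS {n : ℕ} {y : GL (Fin 3) ℂ} (hy : y ∈ NS n) : Wd n y := by
  induction n generalizing y with
  | zero => exact Wd_Cliff y hy
  | succ n ih =>
    obtain ⟨i, e, y, hy, rfl⟩ := hy
    have := Wd_mul (Wd_Cliff _ (hh_mem i.succ)) (Wd_mul (Wd_Tz e) (ih hy))
    rwa [zero_add, add_comm] at this

lemma Wd_FS {n : ℕ} {y : GL (Fin 3) ℂ} (hy : y ∈ FS n) : Wd n y := by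
  cases n with
  | zero => exact Wd_Cliff y hy
  | succ n =>
    obtain ⟨i, _, ⟨e, y, hy, rfl⟩, rfl⟩ := hy
    have := Wd_mul (Wd_Cliff _ (hh_mem i)) (Wd_mul (Wd_Tz e) (Wd_NS hy))
    rwa [zero_add, add_comm] at this

lemma word_mem (w : List Letter) : wordProd w ∈ CliffT := by
  apply Subgroup.list_prod_mem
  intro x hx
  obtain ⟨a, -, rfl⟩ := List.mem_map.mp hx
  apply Subgroup.subset_closure
  cases a <;> simp [Letter.g]

lemma CliffT_FS : ∀ g ∈ CliffT, ∃ n, g ∈ FS n := by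
  apply CliffT_induct
  · exact ⟨0, Cliff.one_mem⟩
  · rintro y ⟨n, hy⟩
    exact ⟨n, C_FS H_mem hy⟩
  · rintro y ⟨n, hy⟩
    exact ⟨n, C_FS S_mem hy⟩
  · rintro y ⟨n, hy⟩
    obtain ⟨j, -, h⟩ := T_FS hy
    exact ⟨j, h⟩

lemma FS_min {n : ℕ} {g : GL (Fin 3) ℂ} (hg : g ∈ FS n) : minTcount g = n := by
  apply le_antisymm
  · exact Nat.sInf_le (Wd_FS hg)
  · apply le_csInf ⟨n, Wd_FS hg⟩
    rintro k ⟨w, rfl, rfl⟩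
    obtain ⟨j, hj, hw⟩ := word_FS w
    rw [FS_disj hg hw]
    exact hj

lemma set_eq (n : ℕ) : {U : GL (Fin 3) ℂ | U ∈ CliffT ∧ minTcount U = n} = FS n := by
  ext g
  constructor
  · rintro ⟨hg, hm⟩
    obtain ⟨k, hk⟩ := CliffT_FS g hg
    rw [FS_min hk] at hm
    rwa [← hm]
  · intro hg
    refine ⟨?_, FS_min hg⟩
    obtain ⟨w, rfl, -⟩ := Wd_FS hg
    exact word_mem w

lemma le_card (n : ℕ) : {U : GL (Fin 3) ℂ | U ∈ CliffT ∧ minTcount U ≤ n}.Finite ∧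
    {U : GL (Fin 3) ℂ | U ∈ CliffT ∧ minTcount U ≤ n}.ncard * 5 + 1944 = 5184 * 6 ^ n := by
  induction n with
  | zero =>
    have h : {U : GL (Fin 3) ℂ | U ∈ CliffT ∧ minTcount U ≤ 0} = FS 0 := by
      rw [← set_eq]; simp
    rw [h]
    refine ⟨FS_finite 0, ?_⟩
    show (Cliff : Set (GL (Fin 3) ℂ)).ncard * 5 + 1944 = _
    rw [Cliff_ncard]
    norm_num
  | succ n ih =>
    obtain ⟨hf, hc⟩ := ih
    have h : {U : GL (Fin 3) ℂ | U ∈ CliffT ∧ minTcount U ≤ n + 1} =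
        {U : GL (Fin 3) ℂ | U ∈ CliffT ∧ minTcount U ≤ n} ∪ FS (n + 1) := by
      rw [← set_eq]
      ext U
      simp only [Set.mem_ofPred_eq, Set.mem_union, ← and_or_left, Nat.le_add_one_iff]
    have hd : Disjoint {U : GL (Fin 3) ℂ | U ∈ CliffT ∧ minTcount U ≤ n} (FS (n + 1)) := by
      rw [Set.disjoint_left]
      rintro U ⟨-, h1⟩ h2
      rw [FS_min h2] at h1
      omega
    rw [h]
    refine ⟨hf.union (FS_finite _), ?_⟩
    rw [Set.ncard_union_eq hd hf (FS_finite _), FS_ncard, pow_succ]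
    omega


/-- For every n ≥ 1, the number of elements of the Clifford+T group
whose minimal T-count equals n is exactly 5184·6^{n−1}; equivalently, for every n ≥ 0,
the number of elements whose minimal T-count is at most n equals 648·(8·6ⁿ − 3)/5. -/
theorem count_of_elements_by_minimal_T_count :
    (∀ n : ℕ, 1 ≤ n →
      {U : GL (Fin 3) ℂ | U ∈ CliffT ∧ minTcount U = n}.ncard = 5184 * 6 ^ (n - 1)) ∧
    (∀ n : ℕ,
      {U : GL (Fin 3) ℂ | U ∈ CliffT ∧ minTcount U ≤ n}.ncard = 648 * (8 * 6 ^ n - 3) / 5) := by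
  refine ⟨fun n hn => ?_, fun n => ?_⟩
  · obtain ⟨m, rfl⟩ := Nat.exists_eq_add_of_le' hn
    rw [set_eq, FS_ncard, Nat.add_sub_cancel]
  · have h := (le_card n).2
    omega

end
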